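/- Let S = K[x_1,…,x_n] be a standard graded polynomial ring over a field K of prime characteristic p, and let I ⊂ S be a proper nonzero graded ideal all of whose associated primes are generated by linear forms. Then for all q = p^e > 1, v(I^{[q]}) ≤ q·v(I) + (q−1)·bight(I). -/

import Mathlib

open MvPolynomial

attribute [local instance] MvPolynomial.gradedAlgebra

noncomputable section

variable {K : Type*} [Field K] {n : ℕ}

/-- The `q`-th Frobenius power `I^{[q]}` of an ideal. -/
def frobPow (I : Ideal (MvPolynomial (Fin n) K)) (q : ℕ) : Ideal (MvPolynomial (Fin n) K) :=
  Ideal.span ((fun a => a ^ q) '' (I : Set (MvPolynomial (Fin n) K)))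

/-- The associated primes of `S/I`. -/
def Ass (I : Ideal (MvPolynomial (Fin n) K)) : Set (Ideal (MvPolynomial (Fin n) K)) :=
  associatedPrimes (MvPolynomial (Fin n) K) (MvPolynomial (Fin n) K ⧸ I)

/-- The v-number of a graded ideal. -/
def vnum (I : Ideal (MvPolynomial (Fin n) K)) : ℕ :=
  sInf {d : ℕ | ∃ f : MvPolynomial (Fin n) K, f.IsHomogeneous d ∧
    ∃ 𝔭 ∈ Ass I, I.colon (Ideal.span {f}) = 𝔭}

/-- The local v-number `v_𝔭(I)`. -/
def vnumLocal (I 𝔭 : Ideal (MvPolynomial (Fin n) K)) : ℕ :=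
  sInf {d : ℕ | ∃ f : MvPolynomial (Fin n) K, f.IsHomogeneous d ∧
    I.colon (Ideal.span {f}) = 𝔭}

/-- The invariant `α_q(I)`. -/
def alphaq (I : Ideal (MvPolynomial (Fin n) K)) (q : ℕ) : ℕ :=
  sInf {d : ℕ | ∃ f : MvPolynomial (Fin n) K, f.IsHomogeneous d ∧
    f ∈ (frobPow I q).colon I ∧ f ∉ frobPow I q}

/-- The height of an ideal: the minimal height of an associated prime. -/
def heightI (I : Ideal (MvPolynomial (Fin n) K)) : ℕ :=
  sInf {h : ℕ | ∃ 𝔭 ∈ Ass I, ∃ h𝔭 : 𝔭.IsPrime,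
    Order.height (⟨𝔭, h𝔭⟩ : PrimeSpectrum (MvPolynomial (Fin n) K)) = (h : ℕ∞)}

/-- The big height of an ideal: the maximal height of an associated prime. -/
def bightI (I : Ideal (MvPolynomial (Fin n) K)) : ℕ :=
  sSup {h : ℕ | ∃ 𝔭 ∈ Ass I, ∃ h𝔭 : 𝔭.IsPrime,
    Order.height (⟨𝔭, h𝔭⟩ : PrimeSpectrum (MvPolynomial (Fin n) K)) = (h : ℕ∞)}

/-- A graded (homogeneous) ideal with respect to the standard grading. -/
def IsGraded (I : Ideal (MvPolynomial (Fin n) K)) : Prop :=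
  Ideal.IsHomogeneous (homogeneousSubmodule (Fin n) K) I

/-- A monomial ideal. -/
def IsMonomialIdeal (I : Ideal (MvPolynomial (Fin n) K)) : Prop :=
  ∃ s : Set (Fin n →₀ ℕ), I = Ideal.span ((fun a => monomial a (1 : K)) '' s)

/-! The Frobenius endomorphism of `S` is flat: it is the substitution `x_i ↦ x_i ^ q`, under which
`S` is free over itself, followed by the Frobenius of `K` on coefficients, a base change along a
field extension. Hence `I^{[q]} : f ^ q = (I : f)^{[q]}`.

If `P = I : f` is a homogeneous prime, then `P = I : f_i` for some homogeneous component `f_i` of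
`f`, because `P ⊆ I : f_i` for all `i` and the intersection of these ideals lies in `P`. So there is
a homogeneous `f` of degree `v(I)` with `P = I : f` an associated prime. A linear change of
coordinates turns `P` into an ideal generated by `h = ht P` variables `x_i`, and for such an ideal a
comparison of exponents gives `P^{[q]} : w = P` with `w = (∏ x_i) ^ (q - 1)`. Therefore
`I^{[q]} : f ^ q w = P^{[q]} : w = P`, and `f ^ q w` has degree `q v(I) + (q - 1) h`.
-/

section Colon

variable {R S : Type*} [CommRing R] [CommRing S]

theorem colon_singleton_mul (I : Ideal R) (f g : R) :
    I.colon {f * g} = (I.colon {f}).colon {g} := by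
  ext r
  simp only [Submodule.mem_colon_singleton, smul_eq_mul, mul_comm f g, mul_assoc]

theorem mem_map_colon_of_mul_algebraMap_mem [Algebra R S] [Module.Flat R S] {I : Ideal R} {f : R}
    {g : S} (h : g * algebraMap R S f ∈ I.map (algebraMap R S)) :
    g ∈ (I.colon {f}).map (algebraMap R S) := by
  obtain ⟨m, s, a, hsum⟩ := Submodule.mem_span_set'.1 h
  choose b hbI hba using fun i => (a i).2
  have relation : ∑ i : Option (Fin m), (i.elim f b : R) • (i.elim g (-s) : S) = 0 := by
    rw [Fintype.sum_option]
    simp only [Option.elim, Algebra.smul_def, hba, Pi.neg_apply, mul_neg, Finset.sum_neg_distrib]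
    rw [mul_comm, ← hsum, add_neg_eq_zero]
    exact Finset.sum_congr rfl fun i _ => mul_comm _ _
  obtain ⟨k, c, y, hg, hc⟩ :=
    Module.Flat.isTrivialRelation_of_sum_smul_eq_zero (R := R) (M := S) relation
  have c_mem_colon (j) : c none j ∈ I.colon {f} := by
    have hcj : f * c none j + ∑ i, b i * c (some i) j = 0 :=
      (Fintype.sum_option _).symm.trans (hc j)
    rw [Submodule.mem_colon_singleton, smul_eq_mul, mul_comm, eq_neg_of_add_eq_zero_left hcj]
    exact I.neg_mem (I.sum_mem fun i _ => I.mul_mem_right _ (hbI i))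
  rw [show g = ∑ j, c none j • y j from hg none]
  refine Ideal.sum_mem _ fun j _ => ?_
  rw [Algebra.smul_def]
  exact Ideal.mul_mem_right _ _ (Ideal.mem_map_of_mem _ (c_mem_colon j))

theorem map_colon_singleton_of_flat {φ : R →+* S} (hφ : φ.Flat) (I : Ideal R) (f : R) :
    (I.colon {f}).map φ = (I.map φ).colon {φ f} := by
  apply le_antisymm
  · refine Ideal.map_le_iff_le_comap.2 fun r hr => ?_
    rw [Submodule.mem_colon_singleton, smul_eq_mul] at hr
    rw [Ideal.mem_comap, Submodule.mem_colon_singleton, smul_eq_mul, ← map_mul]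
    exact Ideal.mem_map_of_mem φ hr
  · intro g hg
    let := φ.toAlgebra
    have : Module.Flat R S := hφ
    exact mem_map_colon_of_mul_algebraMap_mem (Submodule.mem_colon_singleton.1 hg)

theorem mem_associatedPrimes_quotient_iff [IsNoetherianRing R] {I P : Ideal R} :
    P ∈ associatedPrimes R (R ⧸ I) ↔ P.IsPrime ∧ ∃ f, I.colon {f} = P := by
  have colon_mk (f : R) :
      (⊥ : Submodule R (R ⧸ I)).colon {Ideal.Quotient.mk I f} = I.colon {f} := by
    ext r
    rw [Submodule.mem_colon_singleton, Submodule.mem_colon_singleton, Submodule.mem_bot,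
      ← Ideal.Quotient.eq_zero_iff_mem, smul_eq_mul, map_mul]
    rfl
  rw [AssociatedPrimes.mem_iff, isAssociatedPrime_iff, Ideal.Quotient.mk_surjective.exists]
  simp only [colon_mk, eq_comm]

theorem exists_colon_homogeneous_component_eq {ι σ : Type*} [DecidableEq ι] [AddCancelMonoid ι]
    [SetLike σ R] [AddSubmonoidClass σ R] (𝒜 : ι → σ) [GradedRing 𝒜] {I P : Ideal R}
    (hI : I.IsHomogeneous 𝒜) (hP : P.IsHomogeneous 𝒜) (hprime : P.IsPrime) {f : R}
    (hf : I.colon {f} = P) :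
    ∃ i, I.colon {(DirectSum.decompose 𝒜 f i : R)} = P := by
  classical
  have le_colon (i) : P ≤ I.colon {(DirectSum.decompose 𝒜 f i : R)} := by
    intro g hg
    rw [← DirectSum.sum_support_decompose 𝒜 g]
    refine Ideal.sum_mem _ fun j _ => ?_
    have hgf : (DirectSum.decompose 𝒜 g j : R) * f ∈ I :=
      Submodule.mem_colon_singleton.1 (hf ▸ hP j hg)
    rw [Submodule.mem_colon_singleton, smul_eq_mul,
      ← DirectSum.coe_decompose_mul_add_of_left_mem 𝒜 (SetLike.coe_mem _)]
    exact hI (j + i) hgf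
  have inf_colon_le : (DirectSum.decompose 𝒜 f).support.inf
      (fun i => I.colon {(DirectSum.decompose 𝒜 f i : R)}) ≤ P := by
    intro g hg
    rw [← hf, Submodule.mem_colon_singleton, ← DirectSum.sum_support_decompose 𝒜 f,
      Finset.smul_sum]
    exact I.sum_mem fun i hi =>
      Submodule.mem_colon_singleton.1 ((Submodule.mem_finsetInf.1 hg) i hi)
  obtain ⟨i, -, hi⟩ := hprime.inf_le'.1 inf_colon_le
  exact ⟨i, le_antisymm hi (le_colon i)⟩

end Colon

section FrobeniusFlat

theorem flat_of_finite_dual_basis {A B ι : Type*} [CommRing A] [CommRing B] [Fintype ι]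
    {φ : A →+* B} (x : ι → B) (c : ι → B →+ A) (hc : ∀ i a b, c i (φ a * b) = a * c i b)
    (hx : ∀ b, ∑ i, φ (c i b) * x i = b) : φ.Flat := by
  let := φ.toAlgebra
  let coords : B →ₗ[A] ι → A := LinearMap.pi fun i =>
    { c i with map_smul' := fun a b => hc i a b }
  exact Module.Flat.of_retract coords (Fintype.linearCombination A x) (LinearMap.ext hx)

theorem flat_map_mvPolynomial {A B σ : Type*} [CommRing A] [CommRing B] {ψ : A →+* B}
    (hψ : ψ.Flat) : (MvPolynomial.map (σ := σ) ψ).Flat := by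
  let := ψ.toAlgebra
  let := MvPolynomial.algebraMvPolynomial (R := A) (S := B) (σ := σ)
  have : Module.Flat A B := hψ
  have pushout : Algebra.IsPushout A (MvPolynomial σ A) B (MvPolynomial σ B) := inferInstance
  exact RingHom.flat_algebraMap_iff.2
    (Module.Flat.isBaseChange A (MvPolynomial σ A) B (MvPolynomial σ B) pushout.out)

variable {R σ : Type*} {q : ℕ}

/-- The polynomials in `x_i ^ q` form a subring over which the monomials `x ^ r` with all exponents
`r i < q` are a basis. `expandCoeff R r g` is the coefficient of `g` at `x ^ r` in this basis, with
`x_i ^ q` renamed to `x_i`; it collects the terms of `g` whose exponents are congruent to `r`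
modulo `q`. -/
def expandCoeff (R : Type*) [CommSemiring R] (r : σ → Fin q) :
    MvPolynomial σ R →ₗ[R] MvPolynomial σ R :=
  open scoped Classical in
  (basisMonomials σ R).constr R fun t =>
    if ∀ i, t i % q = r i then monomial (t.mapRange (· / q) (Nat.zero_div q)) 1 else 0

theorem expandCoeff_monomial [CommSemiring R] (r : σ → Fin q) (t : σ →₀ ℕ) (a : R)
    [Decidable (∀ i, t i % q = r i)] :
    expandCoeff R r (monomial t a) =
      if ∀ i, t i % q = r i then monomial (t.mapRange (· / q) (Nat.zero_div q)) a else 0 := by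
  have monomial_eq : monomial t a = a • basisMonomials σ R t := by simp [smul_monomial]
  rw [monomial_eq, map_smul, expandCoeff, Module.Basis.constr_basis]
  split_ifs <;> simp [smul_monomial]

theorem expandCoeff_expand_mul [CommSemiring R] (hq : 0 < q) (r : σ → Fin q)
    (f g : MvPolynomial σ R) : expandCoeff R r (expand q f * g) = f * expandCoeff R r g := by
  classical
  induction f using MvPolynomial.induction_on' with
  | add f₁ f₂ h₁ h₂ => simp only [map_add, add_mul, h₁, h₂]
  | monomial s a =>
    induction g using MvPolynomial.induction_on' with
    | add g₁ g₂ h₁ h₂ => simp only [map_add, mul_add, h₁, h₂]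
    | monomial t b =>
      simp only [expand_monomial, monomial_mul, expandCoeff_monomial, Finsupp.add_apply,
        Finsupp.smul_apply, smul_eq_mul, Nat.mul_add_mod]
      split_ifs
      · rw [monomial_mul]
        exact congrArg (monomial · (a * b)) (Finsupp.ext fun i => by simp [Nat.mul_add_div hq])
      · rw [mul_zero]

theorem sum_expand_expandCoeff_mul_monomial [Fintype σ] [DecidableEq σ] [CommSemiring R]
    (hq : 0 < q) (g : MvPolynomial σ R) :
    ∑ r : σ → Fin q, expand q (expandCoeff R r g) *
      monomial (Finsupp.equivFunOnFinite.symm fun i => (r i : ℕ)) 1 = g := by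
  induction g using MvPolynomial.induction_on' with
  | add g₁ g₂ h₁ h₂ => simp only [map_add, add_mul, Finset.sum_add_distrib, h₁, h₂]
  | monomial t a =>
    rw [Finset.sum_eq_single fun i => ⟨t i % q, Nat.mod_lt _ hq⟩]
    · rw [expandCoeff_monomial, if_pos (fun _ => rfl), expand_monomial, monomial_mul, mul_one]
      exact congrArg (monomial · a) (Finsupp.ext fun i => by simp [Nat.div_add_mod])
    · intro r _ hr
      have not_congruent : ¬ ∀ i, t i % q = r i := fun h => hr (funext fun i => Fin.ext (h i).symm)
      rw [expandCoeff_monomial, if_neg not_congruent, map_zero, zero_mul]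
    · exact fun h => absurd (Finset.mem_univ _) h

theorem flat_expand [Finite σ] [CommRing R] (hq : 0 < q) :
    (expand q : MvPolynomial σ R →ₐ[R] MvPolynomial σ R).toRingHom.Flat := by
  classical
  have := Fintype.ofFinite σ
  exact flat_of_finite_dual_basis _ (fun r => (expandCoeff R r).toAddMonoidHom)
    (fun r => expandCoeff_expand_mul hq r) (sum_expand_expandCoeff_mul_monomial hq)

theorem flat_of_field {k A : Type*} [Field k] [CommRing A] (φ : k →+* A) : φ.Flat :=
  let := φ.toAlgebra
  (inferInstance : Module.Flat k A)

theorem flat_iterateFrobenius_mvPolynomial [Finite σ] [Field R] (p : ℕ) [ExpChar R p] (e : ℕ) :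
    (iterateFrobenius (MvPolynomial σ R) p e).Flat := by
  have factorization : iterateFrobenius (MvPolynomial σ R) p e =
      (MvPolynomial.map (iterateFrobenius R p e)).comp
        (expand (p ^ e) : MvPolynomial σ R →ₐ[R] MvPolynomial σ R).toRingHom :=
    RingHom.ext fun g => (map_iterateFrobenius_expand p g e).symm
  rw [factorization]
  exact (flat_expand (expChar_pow_pos R p e)).comp (flat_map_mvPolynomial (flat_of_field _))

end FrobeniusFlat

section Variables

variable {R σ : Type*}

theorem mul_monomial_mem_span_monomial_image_iff [CommSemiring R] {A : Set (σ →₀ ℕ)} {t : σ →₀ ℕ}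
    {g : MvPolynomial σ R} :
    g * monomial t 1 ∈ Ideal.span ((fun a => monomial a (1 : R)) '' A) ↔
      ∀ u ∈ g.support, ∃ a ∈ A, a ≤ u + t := by
  rw [mem_ideal_span_monomial_image]
  constructor <;> intro h u hu
  · exact h (u + t) (by rwa [mem_support_iff, coeff_mul_monomial, mul_one, ← mem_support_iff])
  · rw [mem_support_iff, coeff_mul_monomial', mul_one, ite_ne_right_iff] at hu
    simpa only [tsub_add_cancel_of_le hu.1] using h (u - t) (mem_support_iff.2 hu.2)

theorem colon_prod_X_pow [CommSemiring R] {q : ℕ} (hq : 0 < q) (s : Finset σ) :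
    (Ideal.span ((fun i => (X i : MvPolynomial σ R) ^ q) '' s)).colon {(∏ i ∈ s, X i) ^ (q - 1)} =
      Ideal.span (X '' (s : Set σ)) := by
  classical
  let t : σ →₀ ℕ := Finsupp.indicator s fun _ _ => q - 1
  have t_apply {i : σ} (hi : i ∈ s) : t i = q - 1 := Finsupp.indicator_of_mem hi _
  have prod_eq : (∏ i ∈ s, (X i : MvPolynomial σ R)) ^ (q - 1) = monomial t 1 := by
    rw [← Finset.prod_pow, monomial_eq, C_1, one_mul,
      Finsupp.prod_of_support_subset _ (Finsupp.support_indicator_subset s _) _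
        fun i _ => pow_zero _]
    exact Finset.prod_congr rfl fun i hi => by rw [t_apply hi]
  have powers_eq : (fun i => (X i : MvPolynomial σ R) ^ q) '' s =
      (fun a => monomial a (1 : R)) '' ((fun i => Finsupp.single i q) '' s) := by
    simp only [Set.image_image, X_pow_eq_monomial]
  ext g
  rw [Submodule.mem_colon_singleton, smul_eq_mul, prod_eq, powers_eq,
    mul_monomial_mem_span_monomial_image_iff, mem_ideal_span_X_image]
  simp only [Set.exists_mem_image]
  refine forall₂_congr fun u _ => exists_congr fun i => and_congr_right fun hi => ?_
  rw [Finsupp.single_le_iff, Finsupp.add_apply, t_apply hi]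
  lia

theorem span_X_image_eq_ker [CommRing R] (s : Set σ) [DecidablePred (· ∈ s)] :
    Ideal.span (X '' s) = RingHom.ker
      (aeval fun i => if i ∈ s then 0 else X i : MvPolynomial σ R →ₐ[R] MvPolynomial σ R) := by
  set killVars : MvPolynomial σ R →ₐ[R] MvPolynomial σ R := aeval fun i => if i ∈ s then 0 else X i
  apply le_antisymm
  · rw [Ideal.span_le]
    rintro _ ⟨i, hi, rfl⟩
    simp [killVars, RingHom.mem_ker, hi]
  · intro g hg
    have mk_comp : (Ideal.Quotient.mkₐ R (Ideal.span (X '' s))).comp killVars =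
        Ideal.Quotient.mkₐ R (Ideal.span (X '' s)) := by
      refine MvPolynomial.algHom_ext fun i => ?_
      by_cases hi : i ∈ s
      · simpa [killVars, hi] using
          (Ideal.Quotient.eq_zero_iff_mem.2
            (Ideal.subset_span (Set.mem_image_of_mem (X (R := R)) hi))).symm
      · simp [killVars, hi]
    have mk_eq := DFunLike.congr_fun mk_comp g
    rw [AlgHom.comp_apply, (RingHom.mem_ker).1 hg, map_zero] at mk_eq
    exact Ideal.Quotient.eq_zero_iff_mem.1 mk_eq.symm

theorem isPrime_span_X_image [CommRing R] [IsDomain R] (s : Set σ) :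
    (Ideal.span (X '' s) : Ideal (MvPolynomial σ R)).IsPrime := by
  classical
  rw [span_X_image_eq_ker]
  exact RingHom.ker_isPrime _

theorem X_mem_span_X_image_iff [CommSemiring R] [Nontrivial R] {s : Set σ} {i : σ} :
    (X i : MvPolynomial σ R) ∈ Ideal.span (X '' s) ↔ i ∈ s := by
  classical
  simp [mem_ideal_span_X_image, support_X, Finsupp.single_apply]

theorem height_span_X_image [CommRing R] [IsDomain R] [IsNoetherianRing R] [Finite σ]
    (s : Finset σ) :
    (Ideal.span (X '' (s : Set σ)) : Ideal (MvPolynomial σ R)).height = s.card := by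
  classical
  apply le_antisymm
  · refine (Ideal.height_le_spanFinrank _ (isPrime_span_X_image _).ne_top).trans ?_
    have finrank_le := Submodule.spanFinrank_span_le_ncard_of_finite (R := MvPolynomial σ R)
      (s.finite_toSet.image (X (R := R)))
    rw [Set.ncard_image_of_injective _ X_injective, Set.ncard_coe_finset] at finrank_le
    exact_mod_cast finrank_le
  · induction s using Finset.induction_on with
    | empty => simp
    | insert i s hi ih =>
      have := isPrime_span_X_image (R := R) (s : Set σ)
      have span_lt : (Ideal.span (X '' (s : Set σ)) : Ideal (MvPolynomial σ R)) <
          Ideal.span (X '' ((insert i s : Finset σ) : Set σ)) := by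
        refine SetLike.lt_iff_le_and_exists.2 ⟨Ideal.span_mono (Set.image_mono (by simp)), X i, ?_⟩
        simp only [X_mem_span_X_image_iff, Finset.mem_coe]
        exact ⟨Finset.mem_insert_self i s, hi⟩
      rw [Finset.card_insert_of_notMem hi, Nat.cast_add, Nat.cast_one]
      exact (add_le_add_left ih 1).trans
        (Order.add_one_le_of_lt (Ideal.height_strict_mono_of_isPrime span_lt))

end Variables

section LinearForms

theorem exists_basis_span_image_eq {k V ι : Type*} [DivisionRing k] [AddCommGroup V] [Module k V]
    (c : Module.Basis ι k V) (T : Set V) :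
    ∃ (b : Module.Basis ι k V) (s : Set ι), Submodule.span k (b '' s) = Submodule.span k T := by
  obtain ⟨B, -, span_B, hB⟩ := exists_linearIndependent k T
  have hB : LinearIndepOn k id B := hB
  let b := (Module.Basis.extend hB).reindex ((Module.Basis.extend hB).indexEquiv c)
  have subset_range : B ⊆ Set.range b := by
    rw [Module.Basis.range_reindex, Module.Basis.range_extend]
    exact Module.Basis.subset_extend hB
  exact ⟨b, b ⁻¹' B, by rw [Set.image_preimage_eq_of_subset subset_range, span_B]⟩

variable {R σ : Type*}

/-- The variables, as a basis of the module of linear forms. -/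
def linearFormsBasis (σ R : Type*) [CommSemiring R] :
    Module.Basis σ R (homogeneousSubmodule σ R 1) :=
  (Module.Basis.span (linearIndependent_X σ R)).map
    (LinearEquiv.ofEq _ _ homogeneousSubmodule_one_eq_span_X.symm)

theorem coe_linearFormsBasis [CommSemiring R] (i : σ) :
    (linearFormsBasis σ R i : MvPolynomial σ R) = X i := by
  simp [linearFormsBasis, Module.Basis.span_apply]

/-- The linear change of coordinates sending the variables to a given basis of the module of linear
forms. The polynomial ring is the symmetric algebra of this module, with respect to either basis. -/
def linearChangeOfCoordinates [CommSemiring R]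
    (b : Module.Basis σ R (homogeneousSubmodule σ R 1)) :
    MvPolynomial σ R ≃ₐ[R] MvPolynomial σ R :=
  (SymmetricAlgebra.equivMvPolynomial b).symm.trans
    (SymmetricAlgebra.equivMvPolynomial (linearFormsBasis σ R))

theorem linearChangeOfCoordinates_X [CommSemiring R]
    (b : Module.Basis σ R (homogeneousSubmodule σ R 1)) (i : σ) :
    linearChangeOfCoordinates b (X i) = b i := by
  have ι_eq_subtype :
      (SymmetricAlgebra.equivMvPolynomial (linearFormsBasis σ R)).toLinearMap ∘ₗ
        SymmetricAlgebra.ι R _ = (homogeneousSubmodule σ R 1).subtype :=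
    (linearFormsBasis σ R).ext fun j => by simp [coe_linearFormsBasis]
  simpa [linearChangeOfCoordinates] using DFunLike.congr_fun ι_eq_subtype (b i)

/-- The ideals generated by linear forms, to which the associated primes are assumed to belong. The
zero polynomial counts as a linear form. -/
def IsGeneratedByLinearForms [CommSemiring R] (P : Ideal (MvPolynomial σ R)) : Prop :=
  ∃ L : Set (MvPolynomial σ R), (∀ l ∈ L, l.IsHomogeneous 1) ∧ P = Ideal.span L

theorem IsGeneratedByLinearForms.isHomogeneous [CommSemiring R] {P : Ideal (MvPolynomial σ R)}
    (hP : IsGeneratedByLinearForms P) : P.IsHomogeneous (homogeneousSubmodule σ R) := by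
  obtain ⟨L, hL, rfl⟩ := hP
  exact Ideal.homogeneous_span _ L fun l hl => ⟨1, hL l hl⟩

theorem IsGeneratedByLinearForms.exists_basis_eq_map [Field R] {P : Ideal (MvPolynomial σ R)}
    (hP : IsGeneratedByLinearForms P) :
    ∃ (b : Module.Basis σ R (homogeneousSubmodule σ R 1)) (s : Set σ),
      P = (Ideal.span (X '' s)).map (linearChangeOfCoordinates b) := by
  obtain ⟨L, hL, rfl⟩ := hP
  lift L to Set (homogeneousSubmodule σ R 1) using hL
  obtain ⟨b, s, hbs⟩ := exists_basis_span_image_eq (linearFormsBasis σ R) L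
  refine ⟨b, s, ?_⟩
  have spans_eq := congrArg (Submodule.map (homogeneousSubmodule σ R 1).subtype) hbs
  rw [Submodule.map_span, Submodule.map_span] at spans_eq
  have image_X : linearChangeOfCoordinates b '' (X '' s) =
      (homogeneousSubmodule σ R 1).subtype '' (b '' s) := by
    simp only [Set.image_image, linearChangeOfCoordinates_X, Submodule.subtype_apply]
  rw [Ideal.map_span, image_X]
  simpa only [Ideal.span, Submodule.span_span_of_tower, Submodule.coe_subtype] using
    congrArg (fun W : Submodule R _ => Ideal.span (W : Set (MvPolynomial σ R))) spans_eq.symm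

end LinearForms

section FrobeniusPower

variable {p : ℕ} [ExpChar K p] (e : ℕ)

theorem frobPow_eq_map_iterateFrobenius (I : Ideal (MvPolynomial (Fin n) K)) :
    frobPow I (p ^ e) = I.map (iterateFrobenius (MvPolynomial (Fin n) K) p e) :=
  rfl

theorem frobPow_span (T : Set (MvPolynomial (Fin n) K)) :
    frobPow (Ideal.span T) (p ^ e) = Ideal.span ((· ^ p ^ e) '' T) := by
  rw [frobPow_eq_map_iterateFrobenius, Ideal.map_span]
  rfl

theorem frobPow_colon_pow (I : Ideal (MvPolynomial (Fin n) K)) (f : MvPolynomial (Fin n) K) :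
    (frobPow I (p ^ e)).colon {f ^ p ^ e} = frobPow (I.colon {f}) (p ^ e) := by
  rw [frobPow_eq_map_iterateFrobenius, frobPow_eq_map_iterateFrobenius,
    map_colon_singleton_of_flat (flat_iterateFrobenius_mvPolynomial p e), iterateFrobenius_def]

theorem exists_frobPow_colon_eq_self {P : Ideal (MvPolynomial (Fin n) K)}
    (hP : IsGeneratedByLinearForms P) :
    ∃ w : MvPolynomial (Fin n) K, w.IsHomogeneous (P.height.toNat * (p ^ e - 1)) ∧
      (frobPow P (p ^ e)).colon {w} = P := by
  obtain ⟨b, s, rfl⟩ := hP.exists_basis_eq_map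
  lift s to Finset (Fin n) using s.toFinite
  let φ := linearChangeOfCoordinates b
  refine ⟨φ ((∏ i ∈ s, X i) ^ (p ^ e - 1)), ?_, ?_⟩
  · have height_eq : ((Ideal.span (X '' (s : Set (Fin n)))).map φ).height = s.card :=
      (RingEquiv.height_map φ.toRingEquiv _).trans (height_span_X_image s)
    have prod_isHomogeneous : (∏ i ∈ s, φ (X i)).IsHomogeneous s.card := by
      rw [Finset.card_eq_sum_ones]
      refine IsHomogeneous.prod s _ _ fun i _ => ?_
      rw [linearChangeOfCoordinates_X]
      exact (b i).2
    rw [height_eq, ENat.toNat_natCast, map_pow, map_prod]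
    exact prod_isHomogeneous.pow _
  · have frobPow_eq : frobPow ((Ideal.span (X '' (s : Set (Fin n)))).map φ) (p ^ e) =
        (Ideal.span ((fun i => X i ^ p ^ e) '' (s : Set (Fin n)))).map
          (φ : MvPolynomial (Fin n) K →+* MvPolynomial (Fin n) K) := by
      rw [Ideal.map_span, Ideal.map_span, frobPow_span]
      simp only [Set.image_image, RingHom.coe_coe, map_pow]
    rw [frobPow_eq]
    refine (map_colon_singleton_of_flat (RingHom.Flat.of_bijective φ.bijective) _ _).symm.trans ?_
    rw [colon_prod_X_pow (expChar_pow_pos K p e)]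
    rfl

end FrobeniusPower

section VNumber

variable {I P : Ideal (MvPolynomial (Fin n) K)} {f : MvPolynomial (Fin n) K}

theorem mem_Ass_iff : P ∈ Ass I ↔ P.IsPrime ∧ ∃ f, I.colon {f} = P :=
  mem_associatedPrimes_quotient_iff

theorem vnum_le {d : ℕ} (hf : f.IsHomogeneous d) (hP : P.IsPrime) (hfP : I.colon {f} = P) :
    vnum I ≤ d :=
  Nat.sInf_le ⟨f, hf, P, mem_Ass_iff.2 ⟨hP, f, hfP⟩, by rw [Ideal.colon_span, hfP]⟩

theorem exists_isHomogeneous_vnum (hI : IsGraded I) (htop : I ≠ ⊤)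
    (hAss : ∀ P ∈ Ass I, IsGraded P) :
    ∃ f : MvPolynomial (Fin n) K, f.IsHomogeneous (vnum I) ∧ I.colon {f} ∈ Ass I := by
  have : Nontrivial (MvPolynomial (Fin n) K ⧸ I) := Ideal.Quotient.nontrivial_iff.2 htop
  obtain ⟨P, hP⟩ : (Ass I).Nonempty := associatedPrimes.nonempty _ _
  obtain ⟨hprime, f, hf⟩ := mem_Ass_iff.1 hP
  obtain ⟨d, hd⟩ := exists_colon_homogeneous_component_eq _ hI (hAss P hP) hprime hf
  obtain ⟨g, hg, Q, hQ, hgQ⟩ := Nat.sInf_mem (s := {d : ℕ | ∃ f : MvPolynomial (Fin n) K,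
    f.IsHomogeneous d ∧ ∃ 𝔭 ∈ Ass I, I.colon (Ideal.span {f}) = 𝔭})
    ⟨d, _, SetLike.coe_mem (DirectSum.decompose (homogeneousSubmodule (Fin n) K) f d), P, hP,
       by rw [Ideal.colon_span, hd]⟩
  rw [Ideal.colon_span] at hgQ
  exact ⟨g, hg, hgQ ▸ hQ⟩

theorem height_toNat_le_bightI (hP : P ∈ Ass I) : P.height.toNat ≤ bightI I := by
  have hprime := (mem_Ass_iff.1 hP).1
  have finite_Ass : (Ass I).Finite := associatedPrimes.finite _ _
  refine le_csSup ?_ ⟨P, hP, hprime, ?_⟩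
  · refine ((finite_Ass.image fun Q => Q.height.toNat).subset ?_).bddAbove
    rintro h ⟨Q, hQ, hQprime, height_eq⟩
    rw [← PrimeSpectrum.height_eq_orderHeight] at height_eq
    exact ⟨Q, hQ, congrArg ENat.toNat height_eq⟩
  · rw [← PrimeSpectrum.height_eq_orderHeight,
      ENat.natCast_toNat (Ideal.height_ne_top hprime.ne_top)]

theorem vnum_frobPow_le {p : ℕ} [ExpChar K p] (e : ℕ) {d : ℕ} (hf : f.IsHomogeneous d)
    (hprime : P.IsPrime) (hP : IsGeneratedByLinearForms P) (hfP : I.colon {f} = P) :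
    vnum (frobPow I (p ^ e)) ≤ p ^ e * d + (p ^ e - 1) * P.height.toNat := by
  obtain ⟨w, hw, hwP⟩ := exists_frobPow_colon_eq_self (p := p) e hP
  rw [mul_comm _ d, mul_comm _ P.height.toNat]
  refine vnum_le ((hf.pow (p ^ e)).mul hw) hprime ?_
  rw [colon_singleton_mul, frobPow_colon_pow, hfP, hwP]

end VNumber

theorem stmt9 {K : Type*} [Field K] {n : ℕ} (p : ℕ) (hp : p.Prime) [CharP K p]
    (I : Ideal (MvPolynomial (Fin n) K)) (hgr : IsGraded I) (htop : I ≠ ⊤) (hbot : I ≠ ⊥)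
    (hlin : ∀ 𝔭 ∈ Ass I, ∃ L : Set (MvPolynomial (Fin n) K),
      (∀ l ∈ L, MvPolynomial.IsHomogeneous l 1) ∧ 𝔭 = Ideal.span L)
    (q : ℕ) (hq : ∃ e : ℕ, q = p ^ e) (hq1 : 1 < q) :
    vnum (frobPow I q) ≤ q * vnum I + (q - 1) * bightI I := by
  obtain ⟨e, rfl⟩ := hq
  have : ExpChar K p := ExpChar.prime hp
  have generated_linear (P) (hP : P ∈ Ass I) : IsGeneratedByLinearForms P := hlin P hP
  obtain ⟨f, hf, hfP⟩ := exists_isHomogeneous_vnum hgr htop fun P hP =>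
    (generated_linear P hP).isHomogeneous
  calc vnum (frobPow I (p ^ e))
      ≤ p ^ e * vnum I + (p ^ e - 1) * (I.colon {f}).height.toNat :=
        vnum_frobPow_le e hf (mem_Ass_iff.1 hfP).1 (generated_linear _ hfP) rfl
    _ ≤ p ^ e * vnum I + (p ^ e - 1) * bightI I := by
        gcongr
        exact height_toNat_le_bightI hfP

end
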